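/- arXiv:2404.18093 — 2 statements merged into one kernel-verified Lean document; each statement's English description precedes it below -/
import Mathlib

section
/- If f : X → ℝ is twice differentiable, λ-strongly convex, and satisfies ‖∇f(x)‖ ≤ G for all x ∈ X, then f is (λ/G²)-exp-concave on X, i.e., x ↦ exp(-(λ/G²)·f(x)) is concave on X. -/
open RealInnerProductSpace

/-!
Concavity of `h = exp (-α f)` amounts to monotonicity of its derivative `-α exp (-α f) f'`. For
points `x`, `y`, write `p = f' x (y - x)` and `q = f' y (y - x)`; the claim is
`p * exp (-α f x) ≤ q * exp (-α f y)`. Adding the strong convexity inequalities at `x` and `y` gives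
`q - p ≥ λ ‖y - x‖²`, while the gradient bound gives `α p², α q² ≤ λ ‖y - x‖²`. If `q ≥ 0`, then
`p ≤ q - α q² ≤ q * exp (-α q) ≤ q * exp (-α (f y - f x))`, and the case `p ≤ 0` follows by
exchanging `x` and `y`.
-/

section ConcavityCriterion

theorem concaveOn_of_hasDerivWithinAt_antitoneOn {D : Set ℝ} {φ φ' : ℝ → ℝ} (hD : Convex ℝ D)
    (hφ : ∀ t ∈ D, HasDerivWithinAt φ (φ' t) D t) (hanti : AntitoneOn φ' D) :
    ConcaveOn ℝ D φ := by
  have hderiv : ∀ t ∈ interior D, HasDerivAt φ (φ' t) t := fun t ht =>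
    (hφ t (interior_subset ht)).hasDerivAt (mem_interior_iff_mem_nhds.1 ht)
  exact ((hanti.mono interior_subset).congr fun t ht =>
      (hderiv t ht).deriv.symm).concaveOn_of_deriv hD
    (fun t ht => (hφ t ht).continuousWithinAt)
    (fun t ht => (hderiv t ht).differentiableAt.differentiableWithinAt)

theorem concaveOn_of_hasFDerivWithinAt_antitone {E : Type*} [NormedAddCommGroup E]
    [NormedSpace ℝ E] {s : Set E} {h : E → ℝ} {h' : E → StrongDual ℝ E}
    (hs : Convex ℝ s) (hh : ∀ x ∈ s, HasFDerivWithinAt h (h' x) s x)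
    (hanti : ∀ x ∈ s, ∀ y ∈ s, h' y (y - x) ≤ h' x (y - x)) : ConcaveOn ℝ s h := by
  refine ⟨hs, fun x hx y hy a b ha hb hab => ?_⟩
  let line : ℝ → E := AffineMap.lineMap x y
  have hline : Set.MapsTo line (Set.Icc 0 1) s := hs.mapsTo_lineMap hx hy
  have hderiv : ∀ t ∈ Set.Icc (0 : ℝ) 1,
      HasDerivWithinAt (h ∘ line) (h' (line t) (y - x)) (Set.Icc 0 1) t := fun t ht =>
    (hh _ (hline ht)).comp_hasDerivWithinAt t AffineMap.hasDerivWithinAt_lineMap hline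
  have hderiv_anti : AntitoneOn (fun t => h' (line t) (y - x)) (Set.Icc 0 1) := by
    intro t ht u hu htu
    rcases htu.eq_or_lt with rfl | htu
    · exact le_rfl
    have hsub : line u - line t = (u - t) • (y - x) := by
      simp only [line, AffineMap.lineMap_apply_module']
      module
    have hscaled := hanti _ (hline ht) _ (hline hu)
    simp only [hsub, map_smul, smul_eq_mul] at hscaled
    exact le_of_mul_le_mul_left hscaled (sub_pos.2 htu)
  have hconc : ConcaveOn ℝ (Set.Icc 0 1) (h ∘ line) :=
    concaveOn_of_hasDerivWithinAt_antitoneOn (convex_Icc 0 1) hderiv hderiv_anti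
  have hline_b : line b = a • x + b • y := by
    simp only [line, AffineMap.lineMap_apply_module, eq_sub_of_add_eq hab]
  simpa [line, ← hline_b] using
    hconc.2 (Set.left_mem_Icc.2 zero_le_one) (Set.right_mem_Icc.2 zero_le_one) ha hb hab

end ConcavityCriterion

section ExpInequalities

variable {α p q : ℝ}

theorem le_mul_exp_neg_of_mul_sq_le_sub {δ : ℝ} (hα : 0 ≤ α) (hq : 0 ≤ q)
    (hpq : α * q ^ 2 ≤ q - p) (hδ : δ ≤ q) : p ≤ q * Real.exp (-α * δ) :=
  calc
    p ≤ q * (-α * q + 1) := by linarith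
    _ ≤ q * Real.exp (-α * q) := by gcongr; exact Real.add_one_le_exp _
    _ ≤ q * Real.exp (-α * δ) := by
      gcongr q * Real.exp ?_
      exact mul_le_mul_of_nonpos_left hδ (neg_nonpos.2 hα)

theorem mul_exp_neg_le_mul_exp_neg {u v : ℝ} (hα : 0 ≤ α) (hpu : p ≤ v - u) (huq : v - u ≤ q)
    (hp : α * p ^ 2 ≤ q - p) (hq : α * q ^ 2 ≤ q - p) :
    p * Real.exp (-α * u) ≤ q * Real.exp (-α * v) := by
  have exp_shift (a b : ℝ) :
      Real.exp (-α * (a - b)) * Real.exp (-α * b) = Real.exp (-α * a) := by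
    rw [← Real.exp_add]
    ring_nf
  rcases le_total 0 q with hq₀ | hq₀
  · have hle : p ≤ q * Real.exp (-α * (v - u)) := le_mul_exp_neg_of_mul_sq_le_sub hα hq₀ hq huq
    calc
      p * Real.exp (-α * u) ≤ q * Real.exp (-α * (v - u)) * Real.exp (-α * u) := by gcongr
      _ = q * Real.exp (-α * v) := by rw [mul_assoc, exp_shift]
  · have hle : -q ≤ -p * Real.exp (-α * (u - v)) :=
      le_mul_exp_neg_of_mul_sq_le_sub hα (by linarith) (by linarith [neg_sq p]) (by linarith)
    have hmul : -q * Real.exp (-α * v) ≤ -p * Real.exp (-α * u) :=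
      calc
        -q * Real.exp (-α * v) ≤ -p * Real.exp (-α * (u - v)) * Real.exp (-α * v) := by gcongr
        _ = -p * Real.exp (-α * u) := by rw [mul_assoc, exp_shift]
    linarith

end ExpInequalities

theorem stmt_4_general {E : Type*} [NormedAddCommGroup E] [NormedSpace ℝ E] {s : Set E}
    {f : E → ℝ} {f' : E → StrongDual ℝ E} {lam α : ℝ} (hs : Convex ℝ s)
    (hf : ∀ x ∈ s, HasFDerivWithinAt f (f' x) s x)
    (hsc : ∀ x ∈ s, ∀ y ∈ s, f x + f' x (y - x) + lam / 2 * ‖x - y‖ ^ 2 ≤ f y)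
    (hα : 0 ≤ α) (hgrad : ∀ x ∈ s, α * ‖f' x‖ ^ 2 ≤ lam) :
    ConcaveOn ℝ s (fun x => Real.exp (-α * f x)) := by
  refine concaveOn_of_hasFDerivWithinAt_antitone hs
    (fun x hx => ((hf x hx).const_mul (-α)).exp) fun x hx y hy => ?_
  have hsq : ∀ z ∈ s, α * f' z (y - x) ^ 2 ≤ lam * ‖y - x‖ ^ 2 := fun z hz =>
    calc
      α * f' z (y - x) ^ 2 ≤ α * (‖f' z‖ * ‖y - x‖) ^ 2 := by
        rw [← sq_abs]
        gcongr
        exact (f' z).le_opNorm _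
      _ = α * ‖f' z‖ ^ 2 * ‖y - x‖ ^ 2 := by ring
      _ ≤ lam * ‖y - x‖ ^ 2 := by gcongr; exact hgrad z hz
  have hlam : 0 ≤ lam := (by positivity : 0 ≤ α * ‖f' x‖ ^ 2).trans (hgrad x hx)
  have hquad : 0 ≤ lam / 2 * ‖y - x‖ ^ 2 := by positivity
  have hxy : f x + f' x (y - x) + lam / 2 * ‖y - x‖ ^ 2 ≤ f y := by
    simpa only [norm_sub_rev x y] using hsc x hx y hy
  have hyx : f y - f' y (y - x) + lam / 2 * ‖y - x‖ ^ 2 ≤ f x := by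
    simpa only [← neg_sub y x, map_neg, ← sub_eq_add_neg, norm_neg] using hsc y hy x hx
  have hmono : f' x (y - x) * Real.exp (-α * f x) ≤ f' y (y - x) * Real.exp (-α * f y) :=
    mul_exp_neg_le_mul_exp_neg hα (by linarith) (by linarith)
      (by linarith [hsq x hx]) (by linarith [hsq y hy])
  simp only [smul_apply, smul_eq_mul]
  linarith [mul_le_mul_of_nonneg_left hmono hα]

theorem stmt_4 {d : ℕ} (X : Set (EuclideanSpace ℝ (Fin d))) (hX : Convex ℝ X)
    (f : EuclideanSpace ℝ (Fin d) → ℝ)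
    (f' : EuclideanSpace ℝ (Fin d) → EuclideanSpace ℝ (Fin d))
    (hf : ContDiff ℝ 2 f)
    (hdiff : ∀ x ∈ X, HasGradientAt f (f' x) x)
    (lam G : ℝ) (hlam : 0 < lam) (hG : 0 < G)
    (hsc : ∀ x ∈ X, ∀ y ∈ X,
      f y ≥ f x + ⟪f' x, y - x⟫ + lam / 2 * ‖x - y‖ ^ 2)
    (hgrad : ∀ x ∈ X, ‖f' x‖ ≤ G) :
    ConcaveOn ℝ X (fun x => Real.exp (-(lam / G ^ 2) * f x)) := by
  refine stmt_4_general hX (fun x hx => (hdiff x hx).hasFDerivAt.hasFDerivWithinAt) hsc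
    (by positivity) fun x hx => ?_
  rw [LinearIsometryEquiv.norm_map, div_mul_eq_mul_div, div_le_iff₀ (by positivity)]
  gcongr
  exact hgrad x hx
end

section
/- Let A ⪰ B ≻ 0 be positive definite d×d real matrices. Then tr(A⁻¹(A - B)) ≤ log(det A / det B). -/
/-!
For positive definite `A` and `B`, write `A⁻¹ = Cᴴ * C` with `C` invertible. Then `C * B * Cᴴ` is
positive definite with the trace and determinant of `A⁻¹ * B`, so its eigenvalues `μ i` are positive
with `tr (A⁻¹ * (A - B)) = ∑ i, (1 - μ i)` and `log (det A / det B) = -∑ i, log (μ i)`. The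
inequality is `log x ≤ x - 1` at each eigenvalue.
-/

section LogDet

open Matrix
open scoped ComplexOrder MatrixOrder

theorem trace_inv_mul_sub {R n : Type*} [CommRing R] [Fintype n] [DecidableEq n]
    {A : Matrix n n R} (hA : IsUnit A) (B : Matrix n n R) :
    (A⁻¹ * (A - B)).trace = Fintype.card n - (A⁻¹ * B).trace := by
  rw [mul_sub, nonsing_inv_mul A ((isUnit_iff_isUnit_det A).mp hA), trace_sub, trace_one]

variable {𝕜 n : Type*} [RCLike 𝕜] [Fintype n] [DecidableEq n] {A B : Matrix n n 𝕜}

theorem log_re_det_le_re_trace_sub_card (hA : A.PosDef) :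
    Real.log (RCLike.re A.det) ≤ RCLike.re A.trace - Fintype.card n := by
  have det_eq : RCLike.re A.det = ∏ i, hA.isHermitian.eigenvalues i := by
    rw [hA.isHermitian.det_eq_prod_eigenvalues, ← RCLike.ofReal_prod, RCLike.ofReal_re]
  have trace_eq : RCLike.re A.trace = ∑ i, hA.isHermitian.eigenvalues i := by
    rw [hA.isHermitian.trace_eq_sum_eigenvalues, ← RCLike.ofReal_sum, RCLike.ofReal_re]
  calc Real.log (RCLike.re A.det)
    _ = ∑ i, Real.log (hA.isHermitian.eigenvalues i) := by
      rw [det_eq, Real.log_prod fun i _ => (hA.eigenvalues_pos i).ne']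
    _ ≤ ∑ i, (hA.isHermitian.eigenvalues i - 1) :=
      Finset.sum_le_sum fun i _ => Real.log_le_sub_one_of_pos (hA.eigenvalues_pos i)
    _ = RCLike.re A.trace - Fintype.card n := by
      simp [trace_eq]

theorem exists_posDef_trace_eq_det_eq_mul (hA : A.PosDef) (hB : B.PosDef) :
    ∃ M : Matrix n n 𝕜, M.PosDef ∧ M.trace = (A * B).trace ∧ M.det = (A * B).det := by
  obtain ⟨C, hC, rfl⟩ :=
    CStarAlgebra.isStrictlyPositive_iff_eq_star_mul_self.mp hA.isStrictlyPositive
  refine ⟨C * B * star C, hC.posDef_star_right_conjugate_iff.mpr hB, ?_, ?_⟩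
  · rw [Matrix.mul_assoc (star C), trace_mul_comm]
  · rw [Matrix.mul_assoc (star C), det_mul_comm]

theorem log_re_det_mul_le_re_trace_mul_sub_card (hA : A.PosDef) (hB : B.PosDef) :
    Real.log (RCLike.re (A * B).det) ≤ RCLike.re (A * B).trace - Fintype.card n := by
  obtain ⟨M, hM, trace_eq, det_eq⟩ := exists_posDef_trace_eq_det_eq_mul hA hB
  simpa only [trace_eq, det_eq] using log_re_det_le_re_trace_sub_card hM

theorem log_re_det_inv_mul (hA : A.IsHermitian) (hB : B.IsHermitian) :
    Real.log (RCLike.re (A⁻¹ * B).det) = -Real.log (RCLike.re (A.det / B.det)) := by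
  rw [det_mul, det_nonsing_inv, Ring.inverse_eq_inv', inv_mul_eq_div,
    hA.det_eq_prod_eigenvalues, hB.det_eq_prod_eigenvalues]
  simp only [← RCLike.ofReal_prod, ← RCLike.ofReal_div, RCLike.ofReal_re]
  rw [← Real.log_inv, inv_div]

theorem stmt_7_general (hA : A.PosDef) (hB : B.PosDef) :
    RCLike.re (A⁻¹ * (A - B)).trace ≤ Real.log (RCLike.re (A.det / B.det)) := by
  have key := log_re_det_mul_le_re_trace_mul_sub_card hA.inv hB
  rw [log_re_det_inv_mul hA.isHermitian hB.isHermitian] at key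
  rw [trace_inv_mul_sub hA.isUnit B, map_sub, RCLike.natCast_re]
  linarith

end LogDet

theorem stmt_7 {d : ℕ} (A B : Matrix (Fin d) (Fin d) ℝ)
    (hB : B.PosDef) (hAB : (A - B).PosSemidef) (hA : A.PosDef) :
    (A⁻¹ * (A - B)).trace ≤ Real.log (A.det / B.det) :=
  stmt_7_general hA hB
end
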